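/- arXiv:1102.2361 — 5 statements merged into one kernel-verified Lean document; each statement's English description precedes it below -/
import Mathlib

section
/- Let α > 0 and let x : ℕ → ℝⁿ satisfy x_i(t+1) = Σ_{j=1}^n a_{ij}(t) x_j(t) for all i and t, where for all i, j, t: a_{ij}(t) ≥ 0, Σ_{j=1}^n a_{ij}(t) = 1, a_{ij}(t) > 0 implies a_{ij}(t) ≥ α, and a_{ii}(t) ≥ α. Assume the discrete cut-balance condition: for every t and every nonempty proper subset S of {1,…,n}, there exist i ∈ S and j ∉ S with a_{ij}(t) > 0 if and only if there exist i' ∈ S and j' ∉ S with a_{j'i'}(t) > 0. Then for every i the limit x_i* = lim_{t→∞} x_i(t) exists and x_i* ∈ [min_j x_j(0), max_j x_j(0)]. -/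
open Filter

/-!
Agent `i` listens to agent `j` at time `t` if `a t i j > 0`. Cut balance says that whenever some agent of a set
`S` listens to the complement of `S`, some agent of the complement listens to `S`.

Fix an agent `i` and let `C` be a smallest set containing `i` which from some time on does not
listen to its complement. By minimality (and cut balance, which makes this property stable under
complements), every nonempty `S ⊂ C` listens to its complement infinitely often. After the isolation
time the maximum of `x` over `C` is nonincreasing and the minimum is nondecreasing, so both converge.

The two limits agree. Suppose all values on `C` are at most `M` and one of them is at most `M - d`.
Let `S` be the set of agents known to be at most `M - β`. As long as `S` does not listen outside,
this bound persists. At the first time it does, every agent of `S` keeps weight at least `α` on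
itself, and by cut balance some agent of `C \ S` puts weight at least `α` on `S`; hence the
bound `M - α β` holds on a strictly larger set. After at most `|C| - 1` such steps the
maximum over `C` has dropped by at least `α ^ (|C| - 1) * d` (`exists_forall_le_sub`). If the
limits of the
maximum and the minimum differed by `d > 0`, the maximum would fall below its own limit.
-/

/-- Some agent of `S` puts positive weight on an agent outside `S`. -/
def ListensOutside {n : ℕ} (A : Fin n → Fin n → ℝ) (S : Finset (Fin n)) : Prop :=
  ∃ i ∈ S, ∃ j ∈ Sᶜ, 0 < A i j

/-- The standing assumptions on a sequence of weight matrices `a` and a trajectory `x`: row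
stochasticity, positive weights at least `α`, diagonal weights at least `α`, cut balance, and the
update rule. -/
structure ConsensusSystem {n : ℕ} (α : ℝ) (a : ℕ → Fin n → Fin n → ℝ) (x : ℕ → Fin n → ℝ) :
    Prop where
  pos : 0 < α
  nonneg : ∀ t i j, 0 ≤ a t i j
  stoch : ∀ t i, (∑ j, a t i j) = 1
  lb : ∀ t i j, 0 < a t i j → α ≤ a t i j
  diag : ∀ t i, α ≤ a t i i
  cut : ∀ t (S : Finset (Fin n)), ListensOutside (a t) S → ListensOutside (a t) Sᶜ
  step : ∀ t i, x (t + 1) i = ∑ j, a t i j * x t j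

namespace ConsensusSystem

variable {n : ℕ} {α : ℝ} {a : ℕ → Fin n → Fin n → ℝ} {x : ℕ → Fin n → ℝ}

theorem shift (h : ConsensusSystem α a x) (T : ℕ) :
    ConsensusSystem α (fun t => a (t + T)) (fun t => x (t + T)) where
  pos := h.pos
  nonneg t := h.nonneg _
  stoch t := h.stoch _
  lb t := h.lb _
  diag t := h.diag _
  cut t := h.cut _
  step t i := by
    have := h.step (t + T) i
    rwa [show t + T + 1 = t + 1 + T by ring] at this

theorem neg (h : ConsensusSystem α a x) : ConsensusSystem α a (fun t i => -x t i) where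
  pos := h.pos
  nonneg := h.nonneg
  stoch := h.stoch
  lb := h.lb
  diag := h.diag
  cut := h.cut
  step t i := by simp [h.step t i]

/-- An agent of a set that does not listen outside moves `α β` below the upper bound `M` of that
set as soon as it listens to an agent `k` at depth `β`. -/
theorem step_le (h : ConsensusSystem α a x) {t : ℕ} {C : Finset (Fin n)} {M β : ℝ}
    (hC : ¬ ListensOutside (a t) C) (hM : ∀ j ∈ C, x t j ≤ M) {i k : Fin n} (hi : i ∈ C)
    (hik : α ≤ a t i k) (hβ : 0 ≤ β) (hk : x t k ≤ M - β) : x (t + 1) i ≤ M - α * β := by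
  have h1 : M - x (t + 1) i = ∑ j, a t i j * (M - x t j) := by
    simp only [mul_sub, Finset.sum_sub_distrib, ← Finset.sum_mul, h.stoch, h.step t i, one_mul]
  have h2 : a t i k * (M - x t k) ≤ ∑ j, a t i j * (M - x t j) := by
    refine Finset.single_le_sum (f := fun j => a t i j * (M - x t j)) (fun j _ => ?_)
      (Finset.mem_univ k)
    by_cases hj : j ∈ C
    · exact mul_nonneg (h.nonneg t i j) (sub_nonneg.2 (hM j hj))
    · have : a t i j = 0 := by
        by_contra h0
        exact hC ⟨i, hi, j, by simpa using hj, lt_of_le_of_ne (h.nonneg t i j) (Ne.symm h0)⟩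
      simp [this]
  have h3 : α * β ≤ a t i k * (M - x t k) :=
    mul_le_mul hik (by linarith) hβ (h.nonneg t i k)
  linarith

theorem step_le_bound (h : ConsensusSystem α a x) {t : ℕ} {C : Finset (Fin n)} {M : ℝ}
    (hC : ¬ ListensOutside (a t) C) (hM : ∀ j ∈ C, x t j ≤ M) : ∀ i ∈ C, x (t + 1) i ≤ M := by
  intro i hi
  have := h.step_le hC hM hi (h.diag t i) le_rfl (by simpa using hM i hi)
  simpa using this

theorem le_bound_of_le (h : ConsensusSystem α a x) {t₀ t : ℕ} (ht : t₀ ≤ t) {C : Finset (Fin n)}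
    {M : ℝ} (hC : ∀ s, t₀ ≤ s → s < t → ¬ ListensOutside (a s) C) (hM : ∀ j ∈ C, x t₀ j ≤ M) :
    ∀ i ∈ C, x t i ≤ M := by
  induction t, ht using Nat.le_induction with
  | base => exact hM
  | succ t ht ih =>
    exact h.step_le_bound (hC t ht t.lt_succ_self)
      (ih fun s h1 h2 => hC s h1 (h2.trans t.lt_succ_self))

/-- If `C` never listens outside while each of its nonempty proper subsets does so infinitely often,
then one agent at depth `d` below `M` drags more and more agents of `C` below `M`, at the price of a
factor `α` per additional agent. -/
theorem exists_large_subset (h : ConsensusSystem α a x) {C : Finset (Fin n)}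
    (hC : ∀ t, ¬ ListensOutside (a t) C)
    (hS : ∀ S ⊂ C, S.Nonempty → ∃ᶠ t in atTop, ListensOutside (a t) S)
    {t₀ : ℕ} {M d : ℝ} (hd : 0 ≤ d) (hM : ∀ j ∈ C, x t₀ j ≤ M) {i₀ : Fin n} (hi₀ : i₀ ∈ C)
    (hx₀ : x t₀ i₀ ≤ M - d) (k : ℕ) (hk : k + 1 ≤ C.card) :
    ∃ t, t₀ ≤ t ∧ ∃ S ⊆ C, k + 1 ≤ S.card ∧ ∀ i ∈ S, x t i ≤ M - α ^ k * d := by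
  induction k with
  | zero => exact ⟨t₀, le_rfl, {i₀}, by simpa using hi₀, by simp, by simpa using hx₀⟩
  | succ k ih =>
    obtain ⟨t₁, ht₁, S, hSC, hcard, hSx⟩ := ih (by omega)
    have hβ : 0 ≤ α ^ k * d := mul_nonneg (pow_nonneg h.pos.le _) hd
    have hα : α ≤ 1 := by
      rw [← h.stoch 0 i₀]
      exact (h.diag 0 i₀).trans
        (Finset.single_le_sum (fun j _ => h.nonneg 0 i₀ j) (Finset.mem_univ i₀))
    rcases hSC.eq_or_ssubset with rfl | hlt
    · refine ⟨t₁, ht₁, S, subset_rfl, by omega, fun i hi => (hSx i hi).trans ?_⟩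
      rw [pow_succ']
      nlinarith
    · have hne : S.Nonempty := Finset.card_pos.1 (by omega)
      -- `t` is the first time from `t₁` on at which `S` listens outside.
      have hex : ∃ t, t₁ ≤ t ∧ ListensOutside (a t) S := frequently_atTop.1 (hS S hlt hne) t₁
      classical
      obtain ⟨t, ⟨ht, hout⟩, hmin⟩ : ∃ t, (t₁ ≤ t ∧ ListensOutside (a t) S) ∧
          ∀ s, t₁ ≤ s → s < t → ¬ ListensOutside (a s) S :=
        ⟨Nat.find hex, Nat.find_spec hex, fun s h1 h2 h3 => Nat.find_min hex h2 ⟨h1, h3⟩⟩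
      have hSt := h.le_bound_of_le ht hmin hSx
      have hMt := h.le_bound_of_le (ht₁.trans ht) (fun s _ _ => hC s) hM
      -- Cut balance for `S` yields a listener `j` outside `S`; isolation of `C` puts it in `C`.
      obtain ⟨j, hj, i, hi, hji⟩ := h.cut t S hout
      rw [compl_compl] at hi
      have hjC : j ∈ C := by
        by_contra hjC
        obtain hcut := h.cut t Cᶜ ⟨j, by simpa using hjC, i, by simpa using hSC hi, hji⟩
        exact hC t (by simpa using hcut)
      refine ⟨t + 1, by omega, insert j S, Finset.insert_subset hjC hSC, ?_, ?_⟩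
      · rw [Finset.card_insert_of_notMem (by simpa using hj)]
        omega
      · rw [pow_succ', mul_assoc]
        intro l hl
        rcases Finset.mem_insert.1 hl with rfl | hl
        · exact h.step_le (hC t) hMt hjC (h.lb t _ i hji) hβ (hSt i hi)
        · exact h.step_le (hC t) hMt (hSC hl) (h.diag t l) hβ (hSt l hl)

theorem exists_forall_le_sub (h : ConsensusSystem α a x) {C : Finset (Fin n)}
    (hC : ∀ t, ¬ ListensOutside (a t) C)
    (hS : ∀ S ⊂ C, S.Nonempty → ∃ᶠ t in atTop, ListensOutside (a t) S)
    {t₀ : ℕ} {M d : ℝ} (hd : 0 ≤ d) (hM : ∀ j ∈ C, x t₀ j ≤ M) {i₀ : Fin n} (hi₀ : i₀ ∈ C)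
    (hx₀ : x t₀ i₀ ≤ M - d) :
    ∃ t, ∀ i ∈ C, x t i ≤ M - α ^ (C.card - 1) * d := by
  have hpos : 0 < C.card := Finset.card_pos.2 ⟨i₀, hi₀⟩
  obtain ⟨t, -, S, hSC, hcard, hx⟩ :=
    h.exists_large_subset hC hS hd hM hi₀ hx₀ (C.card - 1) (by omega)
  obtain rfl := Finset.eq_of_subset_of_card_le hSC (by omega)
  exact ⟨t, hx⟩

theorem exists_tendsto_sup' (h : ConsensusSystem α a x) {C : Finset (Fin n)} (hne : C.Nonempty)
    (hC : ∀ t, ¬ ListensOutside (a t) C) :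
    ∃ L, Tendsto (fun t => C.sup' hne (x t)) atTop (nhds L) ∧ ∀ t, L ≤ C.sup' hne (x t) := by
  have hanti : Antitone fun t => C.sup' hne (x t) := antitone_nat_of_succ_le fun t =>
    Finset.sup'_le _ _ (h.step_le_bound (hC t) fun j hj => Finset.le_sup' (x t) hj)
  have hbdd : BddBelow (Set.range fun t => C.sup' hne (x t)) := by
    obtain ⟨i, hi⟩ := hne
    refine ⟨-(C.sup' ⟨i, hi⟩ fun j => -x 0 j), ?_⟩
    rintro _ ⟨t, rfl⟩
    have h1 := h.neg.le_bound_of_le (M := C.sup' ⟨i, hi⟩ fun j => -x 0 j) (Nat.zero_le t)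
      (fun s _ _ => hC s) (fun j hj => Finset.le_sup' (fun j => -x 0 j) hj) i hi
    have h2 := Finset.le_sup' (x t) hi
    linarith
  exact ⟨_, tendsto_atTop_ciInf hanti hbdd, fun t => ciInf_le hbdd t⟩

/-- Consensus on a set `C` that never listens outside while each of its nonempty proper subsets does
so infinitely often. -/
theorem tendsto_of_isolated (h : ConsensusSystem α a x) {C : Finset (Fin n)}
    (hC : ∀ t, ¬ ListensOutside (a t) C)
    (hS : ∀ S ⊂ C, S.Nonempty → ∃ᶠ t in atTop, ListensOutside (a t) S) {i : Fin n} (hi : i ∈ C) :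
    ∃ L, Tendsto (fun t => x t i) atTop (nhds L) := by
  have hne : C.Nonempty := ⟨i, hi⟩
  obtain ⟨U, hU, hUle⟩ := h.exists_tendsto_sup' hne hC
  -- `-V` is the limit of the minimum over `C`.
  obtain ⟨V, hV, hVle⟩ := h.neg.exists_tendsto_sup' hne hC
  have hUV : U ≤ -V := by
    by_contra! hlt
    set d := U - -V with hd
    have hd0 : 0 < d := by linarith
    have hc : 0 < α ^ (C.card - 1) * d := mul_pos (pow_pos h.pos _) hd0
    obtain ⟨t₀, ht₀⟩ := (hU.eventually_lt_const (lt_add_of_pos_right U hc)).exists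
    obtain ⟨i₀, hi₀, hmin⟩ := C.exists_mem_eq_sup' hne (fun j => -x t₀ j)
    have h1 := hVle t₀
    have h2 := hUle t₀
    obtain ⟨t, ht⟩ := h.exists_forall_le_sub (M := C.sup' hne (x t₀)) (t₀ := t₀) hC hS hd0.le
      (fun j hj => Finset.le_sup' (x t₀) hj) hi₀ (by linarith)
    have h3 := Finset.sup'_le hne _ ht
    linarith [hUle t]
  have hVU : -V ≤ U := by
    refine le_of_tendsto_of_tendsto' hV.neg hU fun t => ?_
    have h1 := Finset.le_sup' (fun j => -x t j) hi
    have h2 := Finset.le_sup' (x t) hi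
    linarith
  have hEq : -V = U := le_antisymm hVU hUV
  refine ⟨U, tendsto_of_tendsto_of_tendsto_of_le_of_le (hEq ▸ hV.neg) hU (fun t => ?_)
    fun t => Finset.le_sup' (x t) hi⟩
  have := Finset.le_sup' (fun j => -x t j) hi
  simp only at this ⊢
  linarith

theorem exists_tendsto (h : ConsensusSystem α a x) (i : Fin n) :
    ∃ L, Tendsto (fun t => x t i) atTop (nhds L) := by
  -- `C` is a smallest set containing `i` that eventually does not listen outside.
  obtain ⟨C, ⟨hiC, hev⟩, hmin⟩ := exists_minimal_of_wellFoundedLT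
    (fun C : Finset (Fin n) => i ∈ C ∧ ∀ᶠ t in atTop, ¬ ListensOutside (a t) C)
    ⟨Finset.univ, Finset.mem_univ i, by simp [ListensOutside]⟩
  obtain ⟨T, hT⟩ := eventually_atTop.1 hev
  have hS : ∀ S ⊂ C, S.Nonempty → ∃ᶠ t in atTop, ListensOutside (a t) S := by
    intro S hSC hne hnot
    by_cases hiS : i ∈ S
    · exact hSC.2 (hmin ⟨hiS, hnot⟩ hSC.1)
    · -- Otherwise `C \ S` would be a smaller set of the same kind.
      have hsub : C ≤ C \ S := by
        refine hmin ⟨Finset.mem_sdiff.2 ⟨hiC, hiS⟩, ?_⟩ Finset.sdiff_subset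
        filter_upwards [hev, hnot] with t h1 h2
        rintro ⟨j, hj, k, hk, hjk⟩
        obtain ⟨hjC, hjS⟩ := Finset.mem_sdiff.1 hj
        by_cases hkC : k ∈ C
        · have hkS : k ∈ S := by
            by_contra hkS
            exact (Finset.mem_compl.1 hk) (Finset.mem_sdiff.2 ⟨hkC, hkS⟩)
          have := h.cut t Sᶜ ⟨j, by simpa using hjS, k, by simpa using hkS, hjk⟩
          exact h2 (by simpa using this)
        · exact h1 ⟨j, hjC, k, by simpa using hkC, hjk⟩
      obtain ⟨s, hs⟩ := hne
      exact (Finset.mem_sdiff.1 (hsub (hSC.1 hs))).2 hs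
  obtain ⟨L, hL⟩ := (h.shift T).tendsto_of_isolated (C := C) (fun t => hT _ (by omega))
    (fun S h1 h2 => by
      have hf := hS S h1 h2
      rw [← map_add_atTop_eq_nat T] at hf
      exact hf) hiC
  exact ⟨L, (tendsto_add_atTop_iff_nat T).1 hL⟩

theorem le_iSup (h : ConsensusSystem α a x) (t : ℕ) (i : Fin n) : x t i ≤ ⨆ j, x 0 j :=
  h.le_bound_of_le (Nat.zero_le t) (C := Finset.univ) (fun s _ _ => by simp [ListensOutside])
    (fun j _ => le_ciSup (Set.finite_range (x 0)).bddAbove j) i (Finset.mem_univ i)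

theorem iInf_le (h : ConsensusSystem α a x) (t : ℕ) (i : Fin n) : ⨅ j, x 0 j ≤ x t i := by
  have := h.neg.le_bound_of_le (Nat.zero_le t) (C := Finset.univ) (M := -⨅ j, x 0 j)
    (fun s _ _ => by simp [ListensOutside])
    (fun j _ => neg_le_neg (ciInf_le (Set.finite_range (x 0)).bddBelow j)) i (Finset.mem_univ i)
  exact neg_le_neg_iff.1 this

end ConsensusSystem

/-- (Discrete time.) A discrete-time consensus system with
row-stochastic weights, lower-bounded positive weights, positive diagonal and
the discrete cut-balance condition converges: each `x_i(t)` has a limit in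
`[min_j x_j(0), max_j x_j(0)]`. -/
theorem discrete_cutBalance_convergence
    (n : ℕ) (hn : 1 ≤ n) (α : ℝ) (hα : 0 < α)
    (a : ℕ → Fin n → Fin n → ℝ)
    (ha_nonneg : ∀ t i j, 0 ≤ a t i j)
    (ha_stoch : ∀ t i, (∑ j, a t i j) = 1)
    (ha_lb : ∀ t i j, 0 < a t i j → α ≤ a t i j)
    (ha_diag : ∀ t i, α ≤ a t i i)
    (hcb : ∀ t : ℕ, ∀ S : Finset (Fin n), S.Nonempty → S ≠ Finset.univ →
      ((∃ i ∈ S, ∃ j ∈ Sᶜ, 0 < a t i j) ↔ (∃ i ∈ S, ∃ j ∈ Sᶜ, 0 < a t j i)))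
    (x : ℕ → Fin n → ℝ)
    (hx : ∀ t i, x (t + 1) i = ∑ j, a t i j * x t j) :
    ∀ i, ∃ L : ℝ, Tendsto (fun t => x t i) atTop (nhds L) ∧
      (⨅ j, x 0 j) ≤ L ∧ L ≤ ⨆ j, x 0 j := by
  have h : ConsensusSystem α a x :=
    { pos := hα
      nonneg := ha_nonneg
      stoch := ha_stoch
      lb := ha_lb
      diag := ha_diag
      step := hx
      cut := by
        intro t S hout
        obtain ⟨i, hi, j, hj, hij⟩ := hout
        obtain ⟨i', hi', j', hj', hji⟩ := (hcb t S ⟨i, hi⟩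
          (by rintro rfl; simp at hj)).1 ⟨i, hi, j, hj, hij⟩
        exact ⟨j', hj', i', by simpa using hi', hji⟩ }
  intro i
  obtain ⟨L, hL⟩ := h.exists_tendsto i
  exact ⟨L, hL, ge_of_tendsto' hL fun t => h.iInf_le t i, le_of_tendsto' hL fun t => h.le_iSup t i⟩
end

section
/- Let α > 0 and let x : ℕ → ℝⁿ satisfy x_i(t+1) = Σ_{j=1}^n a_{ij}(t) x_j(t) for all i and t, where for all i, j, t: a_{ij}(t) ≥ 0, Σ_{j=1}^n a_{ij}(t) = 1, a_{ij}(t) > 0 implies a_{ij}(t) ≥ α, and a_{ii}(t) ≥ α. Assume the discrete cut-balance condition: for every t and every nonempty proper subset S of {1,…,n}, there exist i ∈ S and j ∉ S with a_{ij}(t) > 0 if and only if there exist i' ∈ S and j' ∉ S with a_{j'i'}(t) > 0. Let G be the directed graph on {1,…,n} with edge (j,i) if and only if a_{ij}(t) > 0 for infinitely many t. Then every weakly connected component of G is strongly connected, and if i and j belong to the same weakly connected component of G, then lim_{t→∞} x_i(t) = lim_{t→∞} x_j(t). -/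
open Filter

/-!
Every edge of `G` lies on a directed cycle: if `E u v` and `S` is the set of nodes reachable from
`v`, then `u ∉ S` would give infinitely many instants at which `S` receives influence from outside,
hence by cut balance infinitely many at which `S` influences the outside, and by pigeonhole an edge
of `G` leaving `S`, which is impossible. So weak connectivity implies strong connectivity.

For the limits, existence of the limits of intermediate agents is not needed: the spread
`max - min` of the values over a component `C` is shown to tend to zero. After some time `T` only
edges of `G` are active, so `C` evolves on its own and lower and upper bounds on `C` persist. Let
`b` be a lower bound on `C` and `S ⊆ C` a set of agents with value at least `b + δ`. This bound
persists on `S` until `S` first receives influence from outside; at that instant cut balance makes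
some agent outside `S` be influenced by `S`, so one step later a strictly larger set has values at
least `b + α δ`. Starting from a maximizer, after at most `n` enlargements all of `C` is at least
`b + α ^ n (max - b)` (`exists_lift_all`), so the spread shrinks by the factor `1 - α ^ n`
(`exists_contract`), infinitely often.
-/

namespace CutBalance

/-- A convex combination of numbers at least `b`, one of which is at least `b + δ` and has weight
at least `α`, is at least `b + α δ`. Only the indices with positive weight matter. -/
lemma convex_lower {n : ℕ} {α b δ : ℝ} (hδ : 0 ≤ δ) (w y : Fin n → ℝ)
    (hw : ∀ l, 0 ≤ w l) (hsum : ∑ l, w l = 1) (hb : ∀ l, 0 < w l → b ≤ y l)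
    (l₀ : Fin n) (hl₀ : α ≤ w l₀) (hy : b + δ ≤ y l₀) :
    b + α * δ ≤ ∑ l, w l * y l := by
  have hnn : ∀ l, 0 ≤ w l * (y l - b) := by
    intro l
    rcases (hw l).eq_or_lt with h | h
    · simp [← h]
    · exact mul_nonneg h.le (sub_nonneg.2 (hb l h))
  have h1 : w l₀ * (y l₀ - b) ≤ ∑ l, w l * (y l - b) :=
    Finset.single_le_sum (f := fun l => w l * (y l - b)) (fun l _ => hnn l) (Finset.mem_univ l₀)
  have h2 : ∑ l, w l * (y l - b) = ∑ l, w l * y l - b := by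
    simp only [mul_sub, Finset.sum_sub_distrib, ← Finset.sum_mul, hsum, one_mul]
  have h3 : α * δ ≤ w l₀ * δ := mul_le_mul_of_nonneg_right hl₀ hδ
  have h4 : w l₀ * δ ≤ w l₀ * (y l₀ - b) := mul_le_mul_of_nonneg_left (by linarith) (hw l₀)
  linarith

lemma convex_ge {n : ℕ} {b : ℝ} (w y : Fin n → ℝ)
    (hw : ∀ l, 0 ≤ w l) (hsum : ∑ l, w l = 1) (hb : ∀ l, 0 < w l → b ≤ y l) :
    b ≤ ∑ l, w l * y l := by
  have h : ∑ l, w l * b ≤ ∑ l, w l * y l := by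
    refine Finset.sum_le_sum fun l _ => ?_
    rcases (hw l).eq_or_lt with h | h
    · simp [← h]
    · exact mul_le_mul_of_nonneg_left (hb l h) h.le
  rwa [← Finset.sum_mul, hsum, one_mul] at h

lemma convex_le {n : ℕ} {b : ℝ} (w y : Fin n → ℝ)
    (hw : ∀ l, 0 ≤ w l) (hsum : ∑ l, w l = 1) (hb : ∀ l, 0 < w l → y l ≤ b) :
    ∑ l, w l * y l ≤ b := by
  have h := convex_ge (b := -b) w (fun l => -y l) hw hsum fun l hl => neg_le_neg (hb l hl)
  simp only [mul_neg, Finset.sum_neg_distrib] at h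
  linarith

/-- A lower bound on `S` persists as long as no agent of `S` is influenced from outside `S`. -/
lemma persist_ge {n : ℕ} {a : ℕ → Fin n → Fin n → ℝ} {x : ℕ → Fin n → ℝ}
    (ha_nonneg : ∀ t i j, 0 ≤ a t i j) (ha_stoch : ∀ t i, (∑ j, a t i j) = 1)
    (hx : ∀ t i, x (t + 1) i = ∑ j, a t i j * x t j)
    {S : Finset (Fin n)} {t s : ℕ} (hts : t ≤ s) {b : ℝ}
    (hclosed : ∀ r, t ≤ r → r < s → ∀ k ∈ S, ∀ l, 0 < a r k l → l ∈ S)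
    (hb : ∀ k ∈ S, b ≤ x t k) : ∀ k ∈ S, b ≤ x s k := by
  induction s, hts using Nat.le_induction with
  | base => exact hb
  | succ s hs ih =>
    intro k hk
    have ih' := ih fun r hr hrs => hclosed r hr (by omega)
    rw [hx]
    exact convex_ge _ _ (ha_nonneg s k) (ha_stoch s k) fun l hl =>
      ih' l (hclosed s hs (by omega) k hk l hl)

lemma persist_le {n : ℕ} {a : ℕ → Fin n → Fin n → ℝ} {x : ℕ → Fin n → ℝ}
    (ha_nonneg : ∀ t i j, 0 ≤ a t i j) (ha_stoch : ∀ t i, (∑ j, a t i j) = 1)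
    (hx : ∀ t i, x (t + 1) i = ∑ j, a t i j * x t j)
    {S : Finset (Fin n)} {t s : ℕ} (hts : t ≤ s) {b : ℝ}
    (hclosed : ∀ r, t ≤ r → r < s → ∀ k ∈ S, ∀ l, 0 < a r k l → l ∈ S)
    (hb : ∀ k ∈ S, x t k ≤ b) : ∀ k ∈ S, x s k ≤ b := by
  induction s, hts using Nat.le_induction with
  | base => exact hb
  | succ s hs ih =>
    intro k hk
    have ih' := ih fun r hr hrs => hclosed r hr (by omega)
    rw [hx]
    exact convex_le _ _ (ha_nonneg s k) (ha_stoch s k) fun l hl =>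
      ih' l (hclosed s hs (by omega) k hk l hl)

/-- Growth argument: if `b` bounds the values on `C` from below and the agents of `S ⊆ C` exceed
it by `δ`, then at some later time all agents of `C` exceed it by `α ^ m * δ`, where `m` is the
number of agents of `C` outside `S`. -/
lemma exists_lift_all {n : ℕ} {α : ℝ} (hα : 0 < α)
    {a : ℕ → Fin n → Fin n → ℝ} {x : ℕ → Fin n → ℝ}
    (ha_nonneg : ∀ t i j, 0 ≤ a t i j) (ha_stoch : ∀ t i, (∑ j, a t i j) = 1)
    (ha_lb : ∀ t i j, 0 < a t i j → α ≤ a t i j) (ha_diag : ∀ t i, α ≤ a t i i)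
    (hcb : ∀ t : ℕ, ∀ S : Finset (Fin n), S.Nonempty → S ≠ Finset.univ →
      ((∃ i ∈ S, ∃ j ∈ Sᶜ, 0 < a t i j) ↔ (∃ i ∈ S, ∃ j ∈ Sᶜ, 0 < a t j i)))
    (hx : ∀ t i, x (t + 1) i = ∑ j, a t i j * x t j)
    {C : Finset (Fin n)} {T : ℕ}
    (hC : ∀ t, T ≤ t → ∀ k l, 0 < a t k l → (k ∈ C ↔ l ∈ C))
    (hcross : ∀ S ⊆ C, S.Nonempty → S ≠ C → ∀ t, ∃ s, t ≤ s ∧ ∃ k ∈ S, ∃ l ∈ Sᶜ, 0 < a s k l)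
    {b : ℝ} (m : ℕ) : ∀ (S : Finset (Fin n)) (t : ℕ) (δ : ℝ), S ⊆ C → S.Nonempty →
      (C \ S).card = m → T ≤ t → 0 ≤ δ → (∀ k ∈ C, b ≤ x t k) → (∀ k ∈ S, b + δ ≤ x t k) →
      ∃ t', t ≤ t' ∧ ∀ k ∈ C, b + α ^ m * δ ≤ x t' k := by
  induction m with
  | zero =>
    intro S t δ hSC _ hm _ _ _ hS
    have hCS : C ⊆ S := by simpa [Finset.sdiff_eq_empty_iff_subset] using hm
    exact ⟨t, le_rfl, fun k hk => by simpa using hS k (hCS hk)⟩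
  | succ m ih =>
    intro S t δ hSC hne hm hTt hδ hb hS
    have hSneC : S ≠ C := by
      rintro rfl
      simp at hm
    have hex := hcross S hSC hne hSneC t
    classical
    -- `s` is the first instant from `t` on at which `S` is influenced from outside
    obtain ⟨s, ⟨hts, k, hk, l, hl, hkl⟩, hmin⟩ :
        ∃ s, (t ≤ s ∧ ∃ k ∈ S, ∃ l ∈ Sᶜ, 0 < a s k l) ∧
          ∀ r < s, ¬ (t ≤ r ∧ ∃ k ∈ S, ∃ l ∈ Sᶜ, 0 < a r k l) :=
      ⟨Nat.find hex, Nat.find_spec hex, fun r hr => Nat.find_min hex hr⟩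
    have hSuniv : S ≠ Finset.univ := by
      rintro rfl
      simp at hl
    obtain ⟨i, hi, j, hj, hij⟩ := (hcb s S hne hSuniv).1 ⟨k, hk, l, hl, hkl⟩
    rw [Finset.mem_compl] at hj
    have hjC : j ∈ C := (hC s (hTt.trans hts) j i hij).2 (hSC hi)
    have hbs : ∀ k ∈ C, b ≤ x s k := persist_ge ha_nonneg ha_stoch hx hts
      (fun r hr _ k hk l hkl => (hC r (hTt.trans hr) k l hkl).1 hk) hb
    have hSs : ∀ k ∈ S, b + δ ≤ x s k := persist_ge ha_nonneg ha_stoch hx hts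
      (fun r hr hrs k hk l hkl => by
        by_contra hlS
        exact hmin r hrs ⟨hr, k, hk, l, Finset.mem_compl.2 hlS, hkl⟩) hS
    have hstep : ∀ k ∈ C, ∀ l ∈ S, α ≤ a s k l → b + α * δ ≤ x (s + 1) k := by
      intro k hk l hl hkl
      rw [hx]
      exact convex_lower hδ _ _ (ha_nonneg s k) (ha_stoch s k)
        (fun p hp => hbs p ((hC s (hTt.trans hts) k p hp).1 hk)) l hkl (hSs l hl)
    have hbs' : ∀ k ∈ C, b ≤ x (s + 1) k := persist_ge ha_nonneg ha_stoch hx (Nat.le_succ s)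
      (fun r hr _ k hk l hkl => (hC r ((hTt.trans hts).trans hr) k l hkl).1 hk) hbs
    obtain ⟨t', ht', hfin⟩ := ih (insert j S) (s + 1) (α * δ)
      (Finset.insert_subset hjC hSC) (Finset.insert_nonempty _ _)
      (by
        rw [Finset.sdiff_insert, Finset.card_erase_of_mem (by simp [hjC, hj]), hm]
        rfl)
      (by omega) (mul_nonneg hα.le hδ) hbs'
      (by
        intro k hk
        rcases Finset.mem_insert.1 hk with rfl | hk
        · exact hstep k hjC i hi (ha_lb s k i hij)
        · exact hstep k (hSC hk) k hk (ha_diag s k))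
    refine ⟨t', by omega, fun k hk => ?_⟩
    have := hfin k hk
    rwa [← mul_assoc, ← pow_succ] at this

/-- If the values on `C` lie in `[b, B]` at time `t`, then at some later time they lie in an
interval shorter by the factor `1 - α ^ n`. -/
lemma exists_contract {n : ℕ} {α : ℝ} (hα : 0 < α) (hα1 : α ≤ 1)
    {a : ℕ → Fin n → Fin n → ℝ} {x : ℕ → Fin n → ℝ}
    (ha_nonneg : ∀ t i j, 0 ≤ a t i j) (ha_stoch : ∀ t i, (∑ j, a t i j) = 1)
    (ha_lb : ∀ t i j, 0 < a t i j → α ≤ a t i j) (ha_diag : ∀ t i, α ≤ a t i i)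
    (hcb : ∀ t : ℕ, ∀ S : Finset (Fin n), S.Nonempty → S ≠ Finset.univ →
      ((∃ i ∈ S, ∃ j ∈ Sᶜ, 0 < a t i j) ↔ (∃ i ∈ S, ∃ j ∈ Sᶜ, 0 < a t j i)))
    (hx : ∀ t i, x (t + 1) i = ∑ j, a t i j * x t j)
    {C : Finset (Fin n)} (hCne : C.Nonempty) {T : ℕ}
    (hC : ∀ t, T ≤ t → ∀ k l, 0 < a t k l → (k ∈ C ↔ l ∈ C))
    (hcross : ∀ S ⊆ C, S.Nonempty → S ≠ C → ∀ t, ∃ s, t ≤ s ∧ ∃ k ∈ S, ∃ l ∈ Sᶜ, 0 < a s k l)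
    {b B : ℝ} {t : ℕ} (hTt : T ≤ t) (hb : ∀ k ∈ C, b ≤ x t k) (hB : ∀ k ∈ C, x t k ≤ B) :
    ∃ t' b' B', T ≤ t' ∧ (∀ k ∈ C, b' ≤ x t' k) ∧ (∀ k ∈ C, x t' k ≤ B') ∧
      B' - b' ≤ (1 - α ^ n) * (B - b) := by
  obtain ⟨p, hpC, hp⟩ := C.exists_max_image (x t) hCne
  have hδ : 0 ≤ x t p - b := sub_nonneg.2 (hb p hpC)
  obtain ⟨t', ht', hfin⟩ := exists_lift_all hα ha_nonneg ha_stoch ha_lb ha_diag hcb hx hC hcross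
    (b := b) _ {p} t (x t p - b) (by simpa using hpC) (by simp) rfl hTt hδ hb (by simp)
  have hcard : (C \ {p}).card ≤ n := by
    simpa using Finset.card_le_univ (C \ {p})
  have hpow : α ^ n ≤ α ^ (C \ {p}).card := pow_le_pow_of_le_one hα.le hα1 hcard
  refine ⟨t', b + α ^ n * (x t p - b), x t p, hTt.trans ht', fun k hk => ?_, ?_, ?_⟩
  · have := mul_le_mul_of_nonneg_right hpow hδ
    linarith [hfin k hk]
  · exact persist_le ha_nonneg ha_stoch hx ht'
      (fun r hr _ k hk l hkl => (hC r (hTt.trans hr) k l hkl).1 hk) hp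
  · have h1 : α ^ n ≤ 1 := pow_le_one₀ hα.le hα1
    have := mul_le_mul_of_nonneg_left (sub_le_sub_right (hB p hpC) b) (sub_nonneg.2 h1)
    linarith

/-- Cut balance turns every edge of `G` into a directed path in the opposite direction. -/
lemma reverse_path {n : ℕ} {a : ℕ → Fin n → Fin n → ℝ}
    (hcb : ∀ t : ℕ, ∀ S : Finset (Fin n), S.Nonempty → S ≠ Finset.univ →
      ((∃ i ∈ S, ∃ j ∈ Sᶜ, 0 < a t i j) ↔ (∃ i ∈ S, ∃ j ∈ Sᶜ, 0 < a t j i)))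
    {E : Fin n → Fin n → Prop} (hE : ∀ u v, E u v ↔ {t : ℕ | 0 < a t v u}.Infinite)
    {u v : Fin n} (huv : E u v) : Relation.ReflTransGen E v u := by
  classical
  by_contra hnot
  set S : Finset (Fin n) := Finset.univ.filter fun k => Relation.ReflTransGen E v k with hSdef
  have hmem : ∀ k, k ∈ S ↔ Relation.ReflTransGen E v k := fun k => by simp [hSdef]
  have hvS : v ∈ S := (hmem v).2 .refl
  have huS : u ∉ S := fun h => hnot ((hmem u).1 h)
  have hsub : {t : ℕ | 0 < a t v u} ⊆ ⋃ i : Fin n, ⋃ j : Fin n, {t | i ∈ S ∧ j ∉ S ∧ 0 < a t j i} := by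
    intro t ht
    obtain ⟨i, hi, j, hj, hij⟩ := (hcb t S ⟨v, hvS⟩ fun h => huS (h ▸ Finset.mem_univ u)).1
      ⟨v, hvS, u, Finset.mem_compl.2 huS, ht⟩
    simp only [Set.mem_iUnion]
    exact ⟨i, j, hi, Finset.mem_compl.1 hj, hij⟩
  refine (hE u v).1 huv ((Set.finite_iUnion fun i => Set.finite_iUnion fun j => ?_).subset hsub)
  by_cases hij : i ∈ S ∧ j ∉ S
  -- for `i ∈ S`, `j ∉ S`, infinitely many such instants would make `j` reachable from `v`
  · have hnE : ¬ E i j := fun h => hij.2 ((hmem j).2 (((hmem i).1 hij.1).tail h))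
    rw [hE, Set.not_infinite] at hnE
    exact hnE.subset fun t ht => ht.2.2
  · convert Set.finite_empty (α := ℕ)
    ext t
    simp only [Set.mem_ofPred_eq, Set.mem_empty_iff_false, iff_false]
    tauto

lemma strong_of_weak {n : ℕ} {a : ℕ → Fin n → Fin n → ℝ}
    (hcb : ∀ t : ℕ, ∀ S : Finset (Fin n), S.Nonempty → S ≠ Finset.univ →
      ((∃ i ∈ S, ∃ j ∈ Sᶜ, 0 < a t i j) ↔ (∃ i ∈ S, ∃ j ∈ Sᶜ, 0 < a t j i)))
    {E : Fin n → Fin n → Prop} (hE : ∀ u v, E u v ↔ {t : ℕ | 0 < a t v u}.Infinite)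
    {i j : Fin n} (h : Relation.ReflTransGen (fun u v => E u v ∨ E v u) i j) :
    Relation.ReflTransGen E i j := by
  induction h with
  | refl => exact .refl
  | tail _ h ih =>
    rcases h with h | h
    · exact ih.tail h
    · exact ih.trans (reverse_path hcb hE h)

/-- From some time on, only edges of `G` are active. -/
lemma exists_time_edges {n : ℕ} {a : ℕ → Fin n → Fin n → ℝ}
    {E : Fin n → Fin n → Prop} (hE : ∀ u v, E u v ↔ {t : ℕ | 0 < a t v u}.Infinite) :
    ∃ T, ∀ t, T ≤ t → ∀ k l, 0 < a t k l → E l k := by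
  have h : ∀ k l, ∀ᶠ t in atTop, 0 < a t k l → E l k := by
    intro k l
    by_cases hkl : E l k
    · exact Eventually.of_forall fun _ _ => hkl
    · have hfin := hkl
      rw [hE, Set.not_infinite] at hfin
      have := hfin.eventually_cofinite_notMem
      rw [Nat.cofinite_eq_atTop] at this
      filter_upwards [this] with t ht h0
      exact absurd h0 ht
  exact eventually_atTop.1 (eventually_all.2 fun k => eventually_all.2 fun l => h k l)

lemma exists_edge_into {V : Type*} {E : V → V → Prop} {S : Set V} {q p : V}
    (h : Relation.ReflTransGen E q p) (hq : q ∉ S) (hp : p ∈ S) :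
    ∃ u v, u ∉ S ∧ v ∈ S ∧ E u v := by
  induction h with
  | refl => exact absurd hp hq
  | @tail u v _ huv ih =>
    by_cases hu : u ∈ S
    · exact ih hu
    · exact ⟨u, v, hu, hp, huv⟩

end CutBalance

/-- (Discrete time, graph version.) For a discrete-time
cut-balanced consensus system, let `G` have an edge `(j,i)` when `a_{ij}(t) > 0`
infinitely often. Then every weakly connected component of `G` is strongly
connected, and agents in the same component have the same limit. -/
theorem discrete_cutBalance_components_and_limits
    (n : ℕ) (α : ℝ) (hα : 0 < α)
    (a : ℕ → Fin n → Fin n → ℝ)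
    (ha_nonneg : ∀ t i j, 0 ≤ a t i j)
    (ha_stoch : ∀ t i, (∑ j, a t i j) = 1)
    (ha_lb : ∀ t i j, 0 < a t i j → α ≤ a t i j)
    (ha_diag : ∀ t i, α ≤ a t i i)
    (hcb : ∀ t : ℕ, ∀ S : Finset (Fin n), S.Nonempty → S ≠ Finset.univ →
      ((∃ i ∈ S, ∃ j ∈ Sᶜ, 0 < a t i j) ↔ (∃ i ∈ S, ∃ j ∈ Sᶜ, 0 < a t j i)))
    (x : ℕ → Fin n → ℝ)
    (hx : ∀ t i, x (t + 1) i = ∑ j, a t i j * x t j)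
    -- `E u v` : edge from `u` to `v` iff `a_{vu}(t) > 0` for infinitely many `t`
    (E : Fin n → Fin n → Prop)
    (hE : ∀ u v, E u v ↔ {t : ℕ | 0 < a t v u}.Infinite) :
    (∀ i j : Fin n,
      Relation.ReflTransGen (fun u v => E u v ∨ E v u) i j →
      Relation.ReflTransGen E i j) ∧
    (∀ i j : Fin n,
      Relation.ReflTransGen (fun u v => E u v ∨ E v u) i j →
      ∀ Li Lj : ℝ, Tendsto (fun t => x t i) atTop (nhds Li) →
        Tendsto (fun t => x t j) atTop (nhds Lj) → Li = Lj) := by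
  have hsw : ∀ {i j : Fin n}, Relation.ReflTransGen (fun u v => E u v ∨ E v u) i j →
      Relation.ReflTransGen E i j := fun h => CutBalance.strong_of_weak hcb hE h
  refine ⟨fun i j h => hsw h, fun i j hij Li Lj hLi hLj => ?_⟩
  classical
  have hα1 : α ≤ 1 := by
    rw [← ha_stoch 0 i]
    exact (ha_diag 0 i).trans
      (Finset.single_le_sum (fun l _ => ha_nonneg 0 i l) (Finset.mem_univ i))
  obtain ⟨T, hT⟩ := CutBalance.exists_time_edges hE
  -- `C` is the component of `i`
  set C : Finset (Fin n) := Finset.univ.filter fun k => Relation.ReflTransGen E i k with hCdef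
  have hmem : ∀ k, k ∈ C ↔ Relation.ReflTransGen E i k := fun k => by simp [hCdef]
  have hiC : i ∈ C := (hmem i).2 .refl
  have hjC : j ∈ C := (hmem j).2 (hsw hij)
  have hC : ∀ t, T ≤ t → ∀ k l, 0 < a t k l → (k ∈ C ↔ l ∈ C) := by
    intro t ht k l hkl
    have hlk := hT t ht k l hkl
    rw [hmem, hmem]
    exact ⟨fun h => h.trans (CutBalance.reverse_path hcb hE hlk), fun h => h.tail hlk⟩
  have hback : ∀ {k}, Relation.ReflTransGen E i k → Relation.ReflTransGen E k i := by
    intro k h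
    induction h with
    | refl => exact .refl
    | tail _ h ih => exact (CutBalance.reverse_path hcb hE h).trans ih
  have hcross : ∀ S ⊆ C, S.Nonempty → S ≠ C → ∀ t, ∃ s, t ≤ s ∧
      ∃ k ∈ S, ∃ l ∈ Sᶜ, 0 < a s k l := by
    rintro S hSC ⟨p, hp⟩ hne t
    obtain ⟨q, hqC, hqS⟩ := Finset.exists_of_ssubset (hSC.ssubset_of_ne hne)
    have hqp : Relation.ReflTransGen E q p :=
      (hback ((hmem q).1 hqC)).trans ((hmem p).1 (hSC hp))
    obtain ⟨u, v, hu, hv, huv⟩ := CutBalance.exists_edge_into (S := (S : Set (Fin n))) hqp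
      (by simpa using hqS) (by simpa using hp)
    obtain ⟨s, hs, hts⟩ := ((hE u v).1 huv).exists_gt t
    exact ⟨s, hts.le, v, by simpa using hv, u, by simpa using hu, hs⟩
  obtain ⟨p, -, hp⟩ := C.exists_min_image (x T) ⟨i, hiC⟩
  obtain ⟨q, -, hq⟩ := C.exists_max_image (x T) ⟨i, hiC⟩
  have h1 : α ^ n ≤ 1 := pow_le_one₀ hα.le hα1
  have hiter : ∀ m : ℕ, ∃ t b B, T ≤ t ∧ (∀ k ∈ C, b ≤ x t k) ∧ (∀ k ∈ C, x t k ≤ B) ∧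
      B - b ≤ (1 - α ^ n) ^ m * (x T q - x T p) := by
    intro m
    induction m with
    | zero => exact ⟨T, x T p, x T q, le_rfl, hp, hq, by simp⟩
    | succ m ih =>
      obtain ⟨t, b, B, ht, hb, hB, hbB⟩ := ih
      obtain ⟨t', b', B', ht', hb', hB', h⟩ := CutBalance.exists_contract hα hα1 ha_nonneg
        ha_stoch ha_lb ha_diag hcb hx ⟨i, hiC⟩ hC hcross ht hb hB
      refine ⟨t', b', B', ht', hb', hB', h.trans ?_⟩
      rw [pow_succ', mul_assoc]
      exact mul_le_mul_of_nonneg_left hbB (sub_nonneg.2 h1)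
  have hbound : ∀ m : ℕ, |Li - Lj| ≤ (1 - α ^ n) ^ m * (x T q - x T p) := by
    intro m
    obtain ⟨t, b, B, ht, hb, hB, hbB⟩ := hiter m
    have hlow : ∀ k ∈ C, ∀ᶠ s in atTop, b ≤ x s k := fun k hk =>
      eventually_atTop.2 ⟨t, fun s hs => CutBalance.persist_ge ha_nonneg ha_stoch hx hs
        (fun r hr _ k hk l hkl => (hC r (ht.trans hr) k l hkl).1 hk) hb k hk⟩
    have hupp : ∀ k ∈ C, ∀ᶠ s in atTop, x s k ≤ B := fun k hk =>
      eventually_atTop.2 ⟨t, fun s hs => CutBalance.persist_le ha_nonneg ha_stoch hx hs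
        (fun r hr _ k hk l hkl => (hC r (ht.trans hr) k l hkl).1 hk) hB k hk⟩
    have e1 := ge_of_tendsto hLi (hlow i hiC)
    have e2 := le_of_tendsto hLi (hupp i hiC)
    have e3 := ge_of_tendsto hLj (hlow j hjC)
    have e4 := le_of_tendsto hLj (hupp j hjC)
    rw [abs_le]
    constructor <;> linarith
  have hlim : Tendsto (fun m : ℕ => (1 - α ^ n) ^ m * (x T q - x T p)) atTop (nhds 0) := by
    have := (tendsto_pow_atTop_nhds_zero_of_lt_one (sub_nonneg.2 h1)
      (by linarith [pow_pos hα n] : 1 - α ^ n < 1)).mul_const (x T q - x T p)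
    simpa using this
  have h0 : |Li - Lj| ≤ 0 := ge_of_tendsto' hlim hbound
  exact sub_eq_zero.1 (abs_nonpos_iff.1 h0)
end

section
/- Let v : [0,∞) → ℝⁿ be measurable with each v_i integrable on every bounded interval, and let x : [0,∞) → ℝⁿ be continuous with x_i(t) = x_i(0) + ∫_0^t v_i(τ) dτ for all i and t. For each t ≥ 0 let p(t) be the permutation of {1,…,n} that sorts x(t) lexicographically: if i < j then either x_{p_i(t)}(t) < x_{p_j(t)}(t), or x_{p_i(t)}(t) = x_{p_j(t)}(t) and p_i(t) < p_j(t). Then for every i and every t ≥ 0, x_{p_i(t)}(t) = x_{p_i(0)}(0) + ∫_0^t v_{p_i(τ)}(τ) dτ. -/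
/-!
Each sorted component `y t = x (p t i) t` is an order statistic of the vector `x t`, so its
increments are bounded by those of the coordinates
(`abs_orderStat_sub_le`). The coordinates are absolutely continuous, being integrals, hence so is
`y`, and `y` is the integral of its almost everywhere derivative.

It remains to see that `y' = v (p · i)` almost everywhere. For each `k`, the functions `y` and
`x k` agree on the set `{τ | p τ i = k}`. All but countably many points of a subset of `ℝ` are
accumulation points of it (`ae_accPt`), and at an accumulation point of a set where two
differentiable functions agree their derivatives agree. Hence `y' τ = v k τ` for almost every `τ`
in this set, and these finitely many sets cover all times. No measurability of `p` is needed.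
-/

open MeasureTheory Filter

/-- If `σ` and `τ` arrange `a` and `b` in increasing order and `b ≤ a + M` coordinatewise, then
the same bound holds for the order statistics: by pigeonhole, one of the `i + 1` coordinates
`σ 0, …, σ i` occupies a position `k ≥ i` in the ordering `τ`. -/
lemma orderStat_le {n : ℕ} {a b : Fin n → ℝ} {σ τ : Equiv.Perm (Fin n)}
    (hσ : Monotone (a ∘ σ)) (hτ : Monotone (b ∘ τ)) {M : ℝ} (h : ∀ k, b k ≤ a k + M)
    (i : Fin n) : b (τ i) ≤ a (σ i) + M := by
  obtain ⟨j, hj, hij⟩ : ∃ j ≤ i, i ≤ τ.symm (σ j) := by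
    by_contra! hcon
    have hcard : (Finset.Iic i).card ≤ (Finset.Iio i).card :=
      Finset.card_le_card_of_injOn (fun j => τ.symm (σ j))
        (fun j hj => by
          simpa using hcon j (by simpa using hj))
        (fun _ _ _ _ hab => by simpa using hab)
    simp at hcard
  have h1 : b (τ i) ≤ b (σ j) := by simpa using hτ hij
  have h2 : a (σ j) ≤ a (σ i) := hσ hj
  linarith [h (σ j)]

lemma abs_orderStat_sub_le {n : ℕ} {a b : Fin n → ℝ} {σ τ : Equiv.Perm (Fin n)}
    (hσ : Monotone (a ∘ σ)) (hτ : Monotone (b ∘ τ)) (i : Fin n) :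
    |a (σ i) - b (τ i)| ≤ ∑ k, |a k - b k| := by
  have hk (k : Fin n) : |a k - b k| ≤ ∑ k, |a k - b k| :=
    Finset.single_le_sum (f := fun k => |a k - b k|) (fun _ _ => abs_nonneg _) (Finset.mem_univ k)
  have h1 := orderStat_le hσ hτ (M := ∑ k, |a k - b k|)
    (fun k => by linarith [neg_abs_le (a k - b k), hk k]) i
  have h2 := orderStat_le hτ hσ (M := ∑ k, |a k - b k|)
    (fun k => by linarith [le_abs_self (a k - b k), hk k]) i
  rw [abs_le]
  constructor <;> linarith

/-- Increments of `f` bounded by the sum of those of finitely many absolutely continuous functions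
make `f` absolutely continuous. -/
lemma absolutelyContinuousOnInterval_of_dist_le_sum {ι : Type*} [Fintype ι] {f : ℝ → ℝ}
    {F : ι → ℝ → ℝ} {a b : ℝ} (hF : ∀ k, AbsolutelyContinuousOnInterval (F k) a b)
    (h : ∀ s ∈ Set.uIcc a b, ∀ t ∈ Set.uIcc a b,
      dist (f s) (f t) ≤ ∑ k, dist (F k s) (F k t)) :
    AbsolutelyContinuousOnInterval f a b := by
  have hsum := tendsto_finsetSum Finset.univ (fun k _ => hF k)
  rw [Finset.sum_const_zero] at hsum
  refine squeeze_zero' (Eventually.of_forall fun E =>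
    Finset.sum_nonneg fun _ _ => dist_nonneg) ?_ hsum
  filter_upwards [mem_inf_of_right (mem_principal_self _)] with E hE
  rw [Finset.sum_comm]
  exact Finset.sum_le_sum fun m hm => h _ (hE.1 m hm).1 _ (hE.1 m hm).2

/-- Almost every point of a set of reals is an accumulation point of it. -/
lemma ae_accPt (s : Set ℝ) : ∀ᵐ t : ℝ, t ∈ s → AccPt t (𝓟 s) := by
  have hnull := (countable_setOfPred_isolated_right_within (s := s)).measure_zero volume
  filter_upwards [measure_eq_zero_iff_ae_notMem.mp hnull] with t ht hts
  have hne : (nhdsWithin t (s ∩ Set.Ioi t)).NeBot := ⟨fun h => ht ⟨hts, h⟩⟩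
  rw [accPt_principal_iff_nhdsWithin]
  exact hne.mono (nhdsWithin_mono t fun r hr => ⟨hr.1, ne_of_gt hr.2⟩)

/-- (Proposition on the evolution of the sorted vector.) If
`x_i(t) = x_i(0) + ∫_0^t v_i` and `p(t)` is the lexicographic sorting
permutation of `x(t)` (ties broken by the original index), then the sorted
components satisfy `x_{p_i(t)}(t) = x_{p_i(0)}(0) + ∫_0^t v_{p_i(τ)}(τ) dτ`. -/
theorem sorted_vector_evolution
    (n : ℕ)
    (v : Fin n → ℝ → ℝ)
    (hv_meas : ∀ i, Measurable (v i))
    (hv_int : ∀ i (T : ℝ), 0 ≤ T → IntervalIntegrable (v i) volume 0 T)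
    (x : Fin n → ℝ → ℝ)
    (hx_cont : ∀ i, ContinuousOn (x i) (Set.Ici (0:ℝ)))
    (hx : ∀ i (t : ℝ), 0 ≤ t → x i t = x i 0 + ∫ τ in (0:ℝ)..t, v i τ)
    (p : ℝ → Equiv.Perm (Fin n))
    (hp : ∀ t : ℝ, 0 ≤ t → ∀ i j : Fin n, i < j →
      x (p t i) t < x (p t j) t ∨
      (x (p t i) t = x (p t j) t ∧ p t i < p t j)) :
    ∀ i (t : ℝ), 0 ≤ t →
      x (p t i) t = x (p 0 i) 0 + ∫ τ in (0:ℝ)..t, v (p τ i) τ := by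
  intro i T hT
  -- The integral expression agrees with `x` only on `[0, ∞)`, but is controlled at all times.
  let F : Fin n → ℝ → ℝ := fun k t => x k 0 + ∫ τ in (0:ℝ)..t, v k τ
  let y : ℝ → ℝ := fun t => x (p t i) t
  have hmono (t : ℝ) (ht : 0 ≤ t) : Monotone ((fun k => x k t) ∘ p t) := by
    intro a b hab
    rcases hab.lt_or_eq with h | rfl
    · exact (hp t ht a b h).elim le_of_lt fun h => h.1.le
    · exact le_rfl
  have hFac (k : Fin n) : AbsolutelyContinuousOnInterval (F k) 0 T :=
    ((LipschitzWith.const (x k 0)).lipschitzOnWith).absolutelyContinuousOnInterval.fun_add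
      ((hv_int k T hT).absolutelyContinuousOnInterval_intervalIntegral Set.left_mem_uIcc)
  have hyac : AbsolutelyContinuousOnInterval y 0 T := by
    refine absolutelyContinuousOnInterval_of_dist_le_sum hFac fun s hs t ht => ?_
    rw [Set.uIcc_of_le hT] at hs ht
    have hsum : ∑ k, dist (F k s) (F k t) = ∑ k, |x k s - x k t| :=
      Finset.sum_congr rfl fun k _ => by rw [hx k s hs.1, hx k t ht.1, Real.dist_eq]
    rw [hsum, Real.dist_eq]
    exact abs_orderStat_sub_le (hmono s hs.1) (hmono t ht.1) i
  have hderiv : ∀ᵐ τ : ℝ, τ ∈ Set.uIoc 0 T → deriv y τ = v (p τ i) τ := by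
    have hF' : ∀ᵐ τ : ℝ, ∀ k, τ ∈ Set.uIcc 0 T → ∀ c ∈ Set.uIcc 0 T,
        HasDerivAt (fun t => ∫ r in c..t, v k r) (v k τ) τ :=
      ae_all_iff.mpr fun k => (hv_int k T hT).ae_hasDerivAt_integral
    have hacc : ∀ᵐ τ : ℝ, ∀ k, τ ∈ {r | 0 ≤ r ∧ p r i = k} →
        AccPt τ (𝓟 {r | 0 ≤ r ∧ p r i = k}) :=
      ae_all_iff.mpr fun k => ae_accPt _
    filter_upwards [hF', hacc, hyac.ae_differentiableAt] with τ h1 h2 h3 hτ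
    have hτ' := Set.uIoc_subset_uIcc hτ
    have hτ0 : 0 ≤ τ := by rw [Set.uIcc_of_le hT] at hτ'; exact hτ'.1
    have hdF : HasDerivAt (F (p τ i)) (v (p τ i) τ) τ :=
      (h1 (p τ i) hτ' 0 Set.left_mem_uIcc).const_add _
    refine UniqueDiffWithinAt.eq_deriv {r | 0 ≤ r ∧ p r i = p τ i}
      (h2 (p τ i) ⟨hτ0, rfl⟩).uniqueDiffWithinAt (h3 hτ').hasDerivAt.hasDerivWithinAt
      (hdF.hasDerivWithinAt.congr ?_ (hx _ _ hτ0))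
    rintro r ⟨hr0, hr⟩
    change x (p r i) r = _
    rw [hr]
    exact hx _ _ hr0
  have hftc := hyac.integral_deriv_eq_sub
  rw [intervalIntegral.integral_congr_ae hderiv] at hftc
  rw [hftc]
  change y T = y 0 + (y T - y 0)
  ring
end

section
/- Let v : [0,∞) → ℝ² be measurable with v_1 and v_2 integrable on every bounded interval, and let x : [0,∞) → ℝ² be continuous with x_i(t) = x_i(0) + ∫_0^t v_i(τ) dτ for i = 1, 2. For each t ≥ 0 let p(t) be the permutation of {1,2} that sorts x(t) lexicographically: p_1(t) = 1 if x_1(t) < x_2(t) or (x_1(t) = x_2(t)), and p_1(t) = 2 otherwise. Then for i = 1, 2 and every t ≥ 0, x_{p_i(t)}(t) = x_{p_i(0)}(0) + ∫_0^t v_{p_i(τ)}(τ) dτ; in particular min{x_1(t), x_2(t)} = min{x_1(0), x_2(0)} + ∫_0^t v_{p_1(τ)}(τ) dτ. -/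
open MeasureTheory Filter

/-!
The minimum `m` of two absolutely continuous functions is absolutely continuous, hence almost
everywhere differentiable and the integral of its derivative. At almost every `τ` all three of
`x₁`, `x₂`, `m` are differentiable, with `xᵢ' τ = vᵢ τ`. If `xᵢ` realizes the minimum at `τ`, then
`m - xᵢ ≤ 0` attains its maximum `0` there, so `m' τ = vᵢ τ` by Fermat's theorem. No separate
treatment of ties is needed: at a tie, `m'` agrees with both velocities.
The maximum is minus the minimum of the negatives.
-/

lemma absolutelyContinuousOnInterval_min {f g : ℝ → ℝ} {a b : ℝ}
    (hf : AbsolutelyContinuousOnInterval f a b) (hg : AbsolutelyContinuousOnInterval g a b) :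
    AbsolutelyContinuousOnInterval (fun s => min (f s) (g s)) a b := by
  have hfg := Tendsto.add hf hg
  rw [add_zero] at hfg
  refine squeeze_zero (fun _ => Finset.sum_nonneg fun _ _ => dist_nonneg) (fun E => ?_) hfg
  rw [← Finset.sum_add_distrib]
  refine Finset.sum_le_sum fun i _ => ?_
  simp only [Real.dist_eq]
  exact (abs_min_sub_min_le_max _ _ _ _).trans
    (max_le_add_of_nonneg (abs_nonneg _) (abs_nonneg _))

/-- Fermat's theorem applied to `m - f`, which has a local maximum where `m` touches `f` from
below. -/
lemma deriv_eq_of_le_of_eq {m f : ℝ → ℝ} {d s : ℝ} (hle : ∀ r, m r ≤ f r) (heq : m s = f s)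
    (hm : DifferentiableAt ℝ m s) (hf : HasDerivAt f d s) : deriv m s = d := by
  have hmax : IsLocalMax (fun r => m r - f r) s :=
    Eventually.of_forall fun r => by
      have := hle r
      simp only
      linarith
  exact sub_eq_zero.mp (hmax.hasDerivAt_eq_zero (hm.hasDerivAt.sub hf))

/-- The integral equation for the minimum, on one fixed interval `[0, t]`. -/
lemma min_eq_integral (v₁ v₂ x₁ x₂ : ℝ → ℝ) (t : ℝ) (ht : 0 ≤ t)
    (hv₁ : IntervalIntegrable v₁ volume 0 t) (hv₂ : IntervalIntegrable v₂ volume 0 t)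
    (hx₁ : ∀ s : ℝ, 0 ≤ s → x₁ s = x₁ 0 + ∫ τ in (0:ℝ)..s, v₁ τ)
    (hx₂ : ∀ s : ℝ, 0 ≤ s → x₂ s = x₂ 0 + ∫ τ in (0:ℝ)..s, v₂ τ) :
    min (x₁ t) (x₂ t) = min (x₁ 0) (x₂ 0) +
      ∫ τ in (0:ℝ)..t, (if x₁ τ ≤ x₂ τ then v₁ τ else v₂ τ) := by
  -- `F₁`, `F₂` agree with `x₁`, `x₂` on `[0, ∞)`; the values of `x₁`, `x₂` on negative reals are
  -- unconstrained.
  set F₁ : ℝ → ℝ := fun s => (∫ τ in (0:ℝ)..s, v₁ τ) + x₁ 0 with hF₁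
  set F₂ : ℝ → ℝ := fun s => (∫ τ in (0:ℝ)..s, v₂ τ) + x₂ 0 with hF₂
  have e₁ : ∀ s, 0 ≤ s → x₁ s = F₁ s := fun s hs => by rw [hx₁ s hs, add_comm]
  have e₂ : ∀ s, 0 ≤ s → x₂ s = F₂ s := fun s hs => by rw [hx₂ s hs, add_comm]
  have ac_const (c : ℝ) : AbsolutelyContinuousOnInterval (fun _ => c) 0 t :=
    (LipschitzWith.const c).lipschitzOnWith.absolutelyContinuousOnInterval
  have ac₁ : AbsolutelyContinuousOnInterval F₁ 0 t :=
    (hv₁.absolutelyContinuousOnInterval_intervalIntegral Set.left_mem_uIcc).add (ac_const _)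
  have ac₂ : AbsolutelyContinuousOnInterval F₂ 0 t :=
    (hv₂.absolutelyContinuousOnInterval_intervalIntegral Set.left_mem_uIcc).add (ac_const _)
  have acm := absolutelyContinuousOnInterval_min ac₁ ac₂
  have key := acm.integral_deriv_eq_sub
  have hcongr : ∫ τ in (0:ℝ)..t, (if x₁ τ ≤ x₂ τ then v₁ τ else v₂ τ)
      = ∫ τ in (0:ℝ)..t, deriv (fun s => min (F₁ s) (F₂ s)) τ := by
    refine intervalIntegral.integral_congr_ae ?_
    filter_upwards [acm.ae_differentiableAt, hv₁.ae_hasDerivAt_integral,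
      hv₂.ae_hasDerivAt_integral] with τ hm h₁ h₂ hτ
    have hτ' := Set.uIoc_subset_uIcc hτ
    rw [Set.uIoc_of_le ht] at hτ
    have d₁ : HasDerivAt F₁ (v₁ τ) τ := (h₁ hτ' 0 Set.left_mem_uIcc).add_const _
    have d₂ : HasDerivAt F₂ (v₂ τ) τ := (h₂ hτ' 0 Set.left_mem_uIcc).add_const _
    rw [e₁ τ hτ.1.le, e₂ τ hτ.1.le]
    split_ifs with h
    · exact (deriv_eq_of_le_of_eq (fun _ => min_le_left _ _) (min_eq_left h) (hm hτ') d₁).symm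
    · exact (deriv_eq_of_le_of_eq (fun _ => min_le_right _ _) (min_eq_right (not_le.mp h).le)
        (hm hτ') d₂).symm
  rw [hcongr, key, e₁ t ht, e₂ t ht, e₁ 0 le_rfl, e₂ 0 le_rfl]
  ring

/-- (Two-agent sorted evolution, Lemma 2 of the paper.) For
two absolutely continuous functions `x₁, x₂` with velocities `v₁, v₂`, the
pointwise minimum and maximum satisfy the integral equations whose integrand
selects, at each time, the velocity of the function currently realizing the
minimum (resp. maximum), ties going to the function of smaller index: the
sorting permutation `p(t)` has `p₁(t) = 1` iff `x₁(t) ≤ x₂(t)`. -/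
theorem sorted_vector_evolution_two
    (v₁ v₂ : ℝ → ℝ)
    (hv_meas : Measurable v₁ ∧ Measurable v₂)
    (hv_int : ∀ T : ℝ, 0 ≤ T →
      IntervalIntegrable v₁ volume 0 T ∧ IntervalIntegrable v₂ volume 0 T)
    (x₁ x₂ : ℝ → ℝ)
    (hx_cont : ContinuousOn x₁ (Set.Ici (0:ℝ)) ∧ ContinuousOn x₂ (Set.Ici (0:ℝ)))
    (hx₁ : ∀ t : ℝ, 0 ≤ t → x₁ t = x₁ 0 + ∫ τ in (0:ℝ)..t, v₁ τ)
    (hx₂ : ∀ t : ℝ, 0 ≤ t → x₂ t = x₂ 0 + ∫ τ in (0:ℝ)..t, v₂ τ) :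
    ∀ t : ℝ, 0 ≤ t →
      (min (x₁ t) (x₂ t) = min (x₁ 0) (x₂ 0) +
        ∫ τ in (0:ℝ)..t, (if x₁ τ ≤ x₂ τ then v₁ τ else v₂ τ)) ∧
      (max (x₁ t) (x₂ t) = max (x₁ 0) (x₂ 0) +
        ∫ τ in (0:ℝ)..t, (if x₁ τ ≤ x₂ τ then v₂ τ else v₁ τ)) := by
  intro t ht
  obtain ⟨hv₁, hv₂⟩ := hv_int t ht
  refine ⟨min_eq_integral v₁ v₂ x₁ x₂ t ht hv₁ hv₂ hx₁ hx₂, ?_⟩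
  -- The indices are swapped so that `-x₂ ≤ -x₁` reproduces the tie-breaking rule `x₁ ≤ x₂`.
  have h := min_eq_integral (fun s => -v₂ s) (fun s => -v₁ s) (fun s => -x₂ s) (fun s => -x₁ s)
    t ht hv₂.neg hv₁.neg
    (fun s hs => by rw [intervalIntegral.integral_neg, hx₂ s hs]; ring)
    (fun s hs => by rw [intervalIntegral.integral_neg, hx₁ s hs]; ring)
  have hsel : ∀ τ, (if -x₂ τ ≤ -x₁ τ then -v₂ τ else -v₁ τ)
      = -(if x₁ τ ≤ x₂ τ then v₂ τ else v₁ τ) := fun τ => by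
    simp only [neg_le_neg_iff]
    split_ifs <;> rfl
  simp only [hsel, intervalIntegral.integral_neg, min_neg_neg] at h
  rw [max_comm (x₁ t), max_comm (x₁ 0)]
  linarith
end

section
/- Let x : [0,∞) → ℝⁿ satisfy, for every i and t, x_i(t) = x_i(0) + ∫_0^t Σ_{j : |x_i(τ) − x_j(τ)| < 1} (x_j(τ) − x_i(τ)) dτ. Then for every i the limit x_i* = lim_{t→∞} x_i(t) exists, and for every pair i, j, either x_i* = x_j* or |x_i* − x_j*| ≥ 1. -/
open MeasureTheory Filter

/-!
The proof rests on the Lyapunov function `W(t) = ∑ i j, |x i t - x j t|`.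

Write `p i k` for the pull of agent `k` on agent `i`; it is antisymmetric in `(i, k)` because the
interaction is symmetric. Almost everywhere,
`W' = ∑ i j, sign (x i - x j) * (x i' - x j') = ∑ i k, (r i - r k) * p i k`, where
`r i = ∑ j, sign (x i - x j)` is the rank of agent `i`. Ranks are strictly increasing in the
position, with jumps at least `1`, and `p i k` points from `x i` towards `x k`, so
`W' ≤ -∑ i k, |p i k|` (`sum_sign_mul_le`). Since `W ≥ 0`, the integral of `∑ i k, |p i k|` over
`[0, ∞)` is at most `W(0)` (`integral_sum_abs_pull_le`). No preservation of the order of the agents is used.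

Hence every velocity is integrable on `(0, ∞)` and every `x i` converges. If two limits were
distinct and at distance less than `1`, then `|p i j|` would eventually be bounded below by a
positive constant, contradicting its integrability.
-/

/-- The pull exerted on an agent at position `u` by an agent at position `v`. -/
noncomputable def pull (u v : ℝ) : ℝ := if |u - v| < 1 then v - u else 0

lemma pull_antisymm (u v : ℝ) : pull u v = -pull v u := by
  unfold pull
  rw [abs_sub_comm]
  split_ifs <;> ring

lemma abs_pull_le_one (u v : ℝ) : |pull u v| ≤ 1 := by
  unfold pull
  split_ifs with h
  · rw [abs_sub_comm]; exact h.le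
  · simp

lemma measurable_pull {f g : ℝ → ℝ} (hf : Measurable f) (hg : Measurable g) :
    Measurable fun t => pull (f t) (g t) := by
  unfold pull
  exact Measurable.ite (measurableSet_lt (by fun_prop) measurable_const) (by fun_prop)
    measurable_const

lemma intervalIntegrable_sum {n : ℕ} {f : Fin n → ℝ → ℝ} {a b : ℝ}
    (h : ∀ i ∈ (Finset.univ : Finset (Fin n)), IntervalIntegrable (f i) volume a b) :
    IntervalIntegrable (fun t => ∑ i, f i t) volume a b := by
  simpa only [Finset.sum_fn] using IntervalIntegrable.sum _ h

/-- Chain rule for `|u|` in integral form, where `u` is a primitive of `f`. At almost every zero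
of `u` the derivative of `|u|` exists and vanishes, in agreement with `sign 0 = 0`. -/
lemma integral_sign_mul {u f : ℝ → ℝ} {T : ℝ} (hT : 0 ≤ T)
    (hf : IntervalIntegrable f volume 0 T)
    (hu : ∀ t, 0 ≤ t → u t = u 0 + ∫ τ in (0 : ℝ)..t, f τ) :
    IntervalIntegrable (fun t => (SignType.sign (u t) : ℝ) * f t) volume 0 T ∧
      ∫ t in (0 : ℝ)..T, (SignType.sign (u t) : ℝ) * f t = |u T| - |u 0| := by
  set v : ℝ → ℝ := fun t => u 0 + ∫ τ in (0 : ℝ)..t, f τ with hv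
  have hac : AbsolutelyContinuousOnInterval (fun t => |v t|) 0 T := by
    have h := hf.absolutelyContinuousOnInterval_intervalIntegral (c := 0) (by simp)
    rw [absolutelyContinuousOnInterval_iff] at h ⊢
    intro ε hε
    obtain ⟨δ, hδ, H⟩ := h ε hε
    refine ⟨δ, hδ, fun E hE hlen => lt_of_le_of_lt (Finset.sum_le_sum fun i _ => ?_) (H E hE hlen)⟩
    rw [Real.dist_eq, Real.dist_eq]
    refine (abs_abs_sub_abs_le _ _).trans (le_of_eq ?_)
    simp [hv]
  have hae : ∀ᵐ t, t ∈ Set.uIoc 0 T →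
      deriv (fun t => |v t|) t = (SignType.sign (u t) : ℝ) * f t := by
    filter_upwards [hac.ae_differentiableAt, hf.ae_hasDerivAt_integral] with t h1 h2 ht
    have ht' := Set.uIoc_subset_uIcc ht
    have hvd : HasDerivAt v (f t) t := (h2 ht' 0 (by simp)).const_add (u 0)
    have ht0 : 0 ≤ t := by
      rw [Set.uIoc_of_le hT] at ht
      exact ht.1.le
    have huv : u t = v t := hu t ht0
    rw [huv]
    rcases lt_trichotomy (v t) 0 with hneg | hzero | hpos
    · rw [sign_neg hneg]
      simpa [Function.comp_def] using ((hasDerivAt_abs_neg hneg).comp t hvd).deriv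
    · rw [hzero]
      have hmin : IsLocalMin (fun t => |v t|) t :=
        Eventually.of_forall fun s => by simp [hzero]
      simpa using hmin.deriv_eq_zero
    · rw [sign_pos hpos]
      simpa [Function.comp_def] using ((hasDerivAt_abs_pos hpos).comp t hvd).deriv
  constructor
  · refine hac.intervalIntegrable_deriv.congr_ae ?_
    rw [EventuallyEq, ae_restrict_iff' measurableSet_uIoc]
    exact hae
  · rw [← intervalIntegral.integral_congr_ae hae, hac.integral_deriv_eq_sub]
    simp [hv, ← hu T hT]

/-- The rank `∑ j, sign (y i - y j)` increases by at least `1` from a position to a larger one. -/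
lemma rank_add_one_le {n : ℕ} (y : Fin n → ℝ) {i k : Fin n} (h : y i < y k) :
    (∑ j, (SignType.sign (y i - y j) : ℝ)) + 1 ≤ ∑ j, (SignType.sign (y k - y j) : ℝ) := by
  have hmono : ∀ j, (SignType.sign (y i - y j) : ℝ) ≤ (SignType.sign (y k - y j) : ℝ) := by
    intro j
    have : SignType.sign (y i - y j) ≤ SignType.sign (y k - y j) :=
      SignType.sign.monotone (by linarith)
    revert this
    generalize SignType.sign (y i - y j) = a
    generalize SignType.sign (y k - y j) = b
    cases a <;> cases b <;> simp
  rw [← Finset.add_sum_erase _ _ (Finset.mem_univ i),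
    ← Finset.add_sum_erase (Finset.univ : Finset (Fin n))
      (fun j => (SignType.sign (y k - y j) : ℝ)) (Finset.mem_univ i)]
  have h1 : (SignType.sign (y k - y i) : ℝ) = 1 := by
    rw [sign_pos (by linarith)]; simp
  have h2 := Finset.sum_le_sum fun j (_ : j ∈ Finset.univ.erase i) => hmono j
  simp only [sub_self, sign_zero, SignType.coe_zero, h1]
  linarith

/-- The dissipation inequality: the left side is the derivative of `∑ i j, |y i - y j|` along the
dynamics. -/
lemma sum_sign_mul_le {n : ℕ} (y : Fin n → ℝ) :
    ∑ i, ∑ j, (SignType.sign (y i - y j) : ℝ) *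
        ((∑ k, pull (y i) (y k)) - ∑ k, pull (y j) (y k)) ≤
      -∑ i, ∑ k, |pull (y i) (y k)| := by
  set r : Fin n → ℝ := fun i => ∑ j, (SignType.sign (y i - y j) : ℝ) with hr
  set F : Fin n → ℝ := fun i => ∑ k, pull (y i) (y k) with hF
  have e1 : ∑ i, ∑ j, (SignType.sign (y i - y j) : ℝ) * F i = ∑ i, r i * F i := by
    simp only [hr, Finset.sum_mul]
  have e2 : ∑ i, ∑ j, (SignType.sign (y i - y j) : ℝ) * F j = -∑ i, r i * F i := by
    rw [Finset.sum_comm, ← e1, ← Finset.sum_neg_distrib]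
    refine Finset.sum_congr rfl fun i _ => ?_
    rw [← Finset.sum_neg_distrib]
    refine Finset.sum_congr rfl fun j _ => ?_
    rw [← neg_sub (y i) (y j), Left.sign_neg]
    simp
  have e3 : ∑ i, r i * F i = ∑ i, ∑ k, r i * pull (y i) (y k) := by
    simp only [hF, Finset.mul_sum]
  have e4 : ∑ i, r i * F i = -∑ i, ∑ k, r k * pull (y i) (y k) := by
    rw [e3, Finset.sum_comm, ← Finset.sum_neg_distrib]
    refine Finset.sum_congr rfl fun i _ => ?_
    rw [← Finset.sum_neg_distrib]
    refine Finset.sum_congr rfl fun j _ => ?_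
    rw [pull_antisymm]
    ring
  have e5 : ∑ i, ∑ j, (SignType.sign (y i - y j) : ℝ) * (F i - F j) =
      ∑ i, ∑ k, (r i - r k) * pull (y i) (y k) := by
    simp only [mul_sub, sub_mul, Finset.sum_sub_distrib]
    rw [e1, e2, ← e3]
    linarith
  rw [e5, ← Finset.sum_neg_distrib]
  refine Finset.sum_le_sum fun i _ => ?_
  rw [← Finset.sum_neg_distrib]
  refine Finset.sum_le_sum fun k _ => ?_
  by_cases hlt : |y i - y k| < 1
  · have hp : pull (y i) (y k) = y k - y i := by simp [pull, hlt]
    rw [hp]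
    rcases lt_trichotomy (y i) (y k) with h | h | h
    · have := rank_add_one_le y h
      rw [abs_of_pos (by linarith)]
      nlinarith
    · simp [h]
    · have := rank_add_one_le y h
      rw [abs_of_neg (by linarith)]
      nlinarith
  · simp [pull, hlt]

/-- The total pull over `[0, T]` is bounded by the initial value of the Lyapunov function. -/
lemma integral_sum_abs_pull_le {n : ℕ} {x : Fin n → ℝ → ℝ} (hx_meas : ∀ i, Measurable (x i))
    (hx_int : ∀ i (t : ℝ), 0 ≤ t →
      IntervalIntegrable (fun τ => ∑ j, pull (x i τ) (x j τ)) volume 0 t)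
    (hx : ∀ i (t : ℝ), 0 ≤ t →
      x i t = x i 0 + ∫ τ in (0 : ℝ)..t, ∑ j, pull (x i τ) (x j τ))
    {T : ℝ} (hT : 0 ≤ T) :
    ∫ t in (0 : ℝ)..T, ∑ i, ∑ k, |pull (x i t) (x k t)| ≤ ∑ i, ∑ j, |x i 0 - x j 0| := by
  have key : ∀ i j, _ := fun i j =>
    integral_sign_mul (u := fun t => x i t - x j t)
      (f := fun t => (∑ k, pull (x i t) (x k t)) - ∑ k, pull (x j t) (x k t)) hT
      ((hx_int i T hT).sub (hx_int j T hT)) (fun t ht => by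
        rw [intervalIntegral.integral_sub (hx_int i t ht) (hx_int j t ht), hx i t ht, hx j t ht]
        ring)
  have hpint : ∀ i k, IntervalIntegrable (fun t => |pull (x i t) (x k t)|) volume 0 T := by
    intro i k
    refine (intervalIntegrable_const (c := (1 : ℝ))).mono_fun
      (measurable_pull (hx_meas i) (hx_meas k)).abs.aestronglyMeasurable ?_
    exact Eventually.of_forall fun t => by simpa using abs_pull_le_one _ _
  have hI : IntervalIntegrable (fun t => ∑ i, ∑ j, (SignType.sign (x i t - x j t) : ℝ) *
      ((∑ k, pull (x i t) (x k t)) - ∑ k, pull (x j t) (x k t))) volume 0 T :=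
    intervalIntegrable_sum fun i _ => intervalIntegrable_sum fun j _ => (key i j).1
  have hP : IntervalIntegrable (fun t => ∑ i, ∑ k, |pull (x i t) (x k t)|) volume 0 T :=
    intervalIntegrable_sum fun i _ => intervalIntegrable_sum fun j _ => hpint i j
  have hle := intervalIntegral.integral_mono_on hT hI hP.neg
    (fun t _ => sum_sign_mul_le fun i => x i t)
  have hval : ∫ t in (0 : ℝ)..T, ∑ i, ∑ j, (SignType.sign (x i t - x j t) : ℝ) *
      ((∑ k, pull (x i t) (x k t)) - ∑ k, pull (x j t) (x k t)) =
      ∑ i, ∑ j, (|x i T - x j T| - |x i 0 - x j 0|) := by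
    rw [intervalIntegral.integral_finsetSum fun i _ =>
      intervalIntegrable_sum fun j _ => (key i j).1]
    refine Finset.sum_congr rfl fun i _ => ?_
    rw [intervalIntegral.integral_finsetSum fun j _ => (key i j).1]
    exact Finset.sum_congr rfl fun j _ => (key i j).2
  have hneg : ∫ t in (0 : ℝ)..T, (-fun t => ∑ i, ∑ k, |pull (x i t) (x k t)|) t =
      -∫ t in (0 : ℝ)..T, ∑ i, ∑ k, |pull (x i t) (x k t)| :=
    intervalIntegral.integral_neg
  rw [hval, hneg] at hle
  simp only [Finset.sum_sub_distrib] at hle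
  have hpos : 0 ≤ ∑ i, ∑ j, |x i T - x j T| := by positivity
  linarith

/-- (Bounded-confidence opinion dynamics.) For the system
`dx_i/dt = Σ_{j : |x_i − x_j| < 1} (x_j − x_i)` (in integral form), every agent
value converges, and the limits of any two agents are either equal or at
distance at least 1. -/
theorem boundedConfidence_convergence_and_separation
    (n : ℕ)
    (x : Fin n → ℝ → ℝ)
    (hx_meas : ∀ i, Measurable (x i))
    (hx_int : ∀ i (t : ℝ), 0 ≤ t →
      IntervalIntegrable
        (fun τ => ∑ j, if |x i τ - x j τ| < 1 then x j τ - x i τ else 0) volume 0 t)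
    (hx : ∀ i (t : ℝ), 0 ≤ t →
      x i t = x i 0 +
        ∫ τ in (0:ℝ)..t, ∑ j, if |x i τ - x j τ| < 1 then x j τ - x i τ else 0) :
    ∃ xs : Fin n → ℝ,
      (∀ i, Tendsto (x i) atTop (nhds (xs i))) ∧
      (∀ i j, xs i = xs j ∨ 1 ≤ |xs i - xs j|) := by
  have hbound := fun T (hT : (0 : ℝ) ≤ T) => integral_sum_abs_pull_le hx_meas hx_int hx hT
  have hloc : ∀ i k (T : ℝ), IntegrableOn (fun t => pull (x i t) (x k t)) (Set.Ioc 0 T) := by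
    intro i k T
    refine Integrable.mono' (g := fun _ => (1 : ℝ)) (integrableOn_const (by simp))
      (measurable_pull (hx_meas i) (hx_meas k)).aestronglyMeasurable ?_
    exact Eventually.of_forall fun t => by simpa using abs_pull_le_one _ _
  have hpull : ∀ i k, IntegrableOn (fun t => pull (x i t) (x k t)) (Set.Ioi 0) := by
    intro i k
    refine integrableOn_Ioi_of_intervalIntegral_norm_bounded (∑ i, ∑ j, |x i 0 - x j 0|) 0
      (hloc i k) tendsto_id ?_
    filter_upwards [eventually_ge_atTop 0] with T hT
    refine le_trans ?_ (hbound T hT)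
    have hint : ∀ i k, IntervalIntegrable (fun t => |pull (x i t) (x k t)|) volume 0 T :=
      fun i k => (intervalIntegrable_iff_integrableOn_Ioc_of_le hT).2 (hloc i k T).abs
    refine intervalIntegral.integral_mono_on hT (hint i k)
      (intervalIntegrable_sum fun i _ => intervalIntegrable_sum fun j _ => hint i j) ?_
    intro t _
    calc |pull (x i t) (x k t)| ≤ ∑ k, |pull (x i t) (x k t)| :=
          Finset.single_le_sum (f := fun k => |pull (x i t) (x k t)|)
            (fun _ _ => abs_nonneg _) (Finset.mem_univ k)
      _ ≤ ∑ i, ∑ k, |pull (x i t) (x k t)| :=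
          Finset.single_le_sum (f := fun i => ∑ k, |pull (x i t) (x k t)|)
            (fun _ _ => by positivity) (Finset.mem_univ i)
  have hlim : ∀ i, Tendsto (x i) atTop
      (nhds (x i 0 + ∫ t in Set.Ioi (0 : ℝ), ∑ j, pull (x i t) (x j t))) := by
    intro i
    have hI : IntegrableOn (fun t => ∑ j, pull (x i t) (x j t)) (Set.Ioi 0) :=
      integrable_finsetSum _ fun j _ => hpull i j
    refine ((intervalIntegral_tendsto_integral_Ioi 0 hI tendsto_id).const_add (x i 0)).congr' ?_
    filter_upwards [eventually_ge_atTop 0] with t ht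
    exact (hx i t ht).symm
  refine ⟨_, hlim, fun i j => ?_⟩
  by_contra! hne
  obtain ⟨hne, hlt⟩ := hne
  have hL := abs_pos.2 (sub_ne_zero.2 hne)
  have hdiff := ((hlim i).sub (hlim j)).abs
  generalize |(x i 0 + ∫ t in Set.Ioi (0 : ℝ), ∑ k, pull (x i t) (x k t)) -
    (x j 0 + ∫ t in Set.Ioi (0 : ℝ), ∑ k, pull (x j t) (x k t))| = L at hdiff hlt hL
  obtain ⟨M, hM⟩ := eventually_atTop.1 ((hdiff.eventually (gt_mem_nhds hlt)).and
    (hdiff.eventually (lt_mem_nhds (half_lt_self hL))))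
  -- Beyond `M` the two agents interact and stay at distance more than `L / 2`.
  have hconst : IntegrableOn (fun _ : ℝ => L / 2) (Set.Ioi (max M 0)) := by
    refine Integrable.mono' ((hpull i j).mono_set (Set.Ioi_subset_Ioi (le_max_right M 0))).abs
      measurable_const.aestronglyMeasurable ?_
    filter_upwards [ae_restrict_mem measurableSet_Ioi] with t ht
    obtain ⟨h1, h2⟩ := hM t ((le_max_left M 0).trans (le_of_lt ht))
    rw [Real.norm_of_nonneg (by positivity)]
    simp only [pull, h1, if_true]
    rw [abs_sub_comm]
    exact h2.le
  rw [integrableOn_const_iff] at hconst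
  simp at hconst
  linarith
end
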